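/- arXiv:1505.06026 — 3 statements merged into one kernel-verified Lean document; each statement's English description precedes it below -/
import Mathlib

section
/- Let Δ ⊆ D \ {0} be an open connected set and suppose there exists z₀ ∈ Δ such that I − z₀⁻¹A(z₀) is boundedly invertible. Then the set of characteristic values of A contained in Δ is discrete, i.e. it has no accumulation point in Δ. -/
/-!
This is the analytic Fredholm alternative. The heart of the matter is local: near any point `w` of
`Δ`, invertibility of `1 - K z`, where `K z = z⁻¹ • A z`, is detected by one scalar analytic
function.

The compact operator `K w` is within distance `1` of a finite rank operator `F = ι P`, where
`P : H → V` and `ι : V → H` is the inclusion of a finite-dimensional subspace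
(`exists_finiteRank_approx`). By continuity `S z = 1 - (K z - F)` is invertible for `z` near `w`,
and `1 - K z = S z * (1 - (S z)⁻¹ ι P)`. Exchanging the two factors
(`isUnit_one_sub_comp_comm`), this is invertible exactly when the endomorphism `1 - P (S z)⁻¹ ι`
of `V` is, that is, when its determinant, which is analytic in `z`, does not vanish
(`exists_analytic_detector`).

Zeros of a scalar analytic function are isolated unless the function vanishes near the point. Hence
each point of `Δ` has a punctured neighbourhood on which `1 - K z` is always invertible, or a
neighbourhood on which it never is. Both alternatives are open conditions and they exclude each
other; since `Δ` is connected and the first one holds at `z₀`, it holds on all of `Δ`.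
-/

open Filter Topology

/-- Orthogonally project the range of `T` onto the span of a finite `1/2`-net of the image of the
unit ball. -/
lemma exists_finiteRank_approx {H : Type*} [NormedAddCommGroup H] [InnerProductSpace ℂ H]
    (T : H →L[ℂ] H) (hT : IsCompactOperator T) :
    ∃ (V : Submodule ℂ H) (_ : FiniteDimensional ℂ V) (P : H →L[ℂ] V),
      ‖T - V.subtypeL ∘L P‖ < 1 := by
  have hc : IsCompact (closure ((T : H →ₗ[ℂ] H) '' Metric.closedBall 0 1)) :=
    IsCompactOperator.isCompact_closure_image_closedBall (f := (T : H →ₗ[ℂ] H)) hT 1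
  obtain ⟨t, -, htfin, htc⟩ :=
    exists_finite_cover_balls_of_isCompact_closure hc (ε := 1 / 2) (by norm_num)
  have hfd : FiniteDimensional ℂ (Submodule.span ℂ t) := FiniteDimensional.span_of_finite ℂ htfin
  refine ⟨Submodule.span ℂ t, hfd, (Submodule.span ℂ t).orthogonalProjectionOnto ∘L T, ?_⟩
  refine lt_of_le_of_lt (b := (1 / 2 : ℝ)) ?_ (by norm_num)
  refine ContinuousLinearMap.opNorm_le_of_unit_norm (by norm_num) fun x hx => ?_
  have hmem : T x ∈ ⋃ y ∈ t, Metric.ball y (1 / 2 : ℝ) :=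
    htc ⟨x, by simp [hx], rfl⟩
  simp only [Set.mem_iUnion, Metric.mem_ball, dist_eq_norm] at hmem
  obtain ⟨y, hyt, hy⟩ := hmem
  have hmin := (Submodule.span ℂ t).starProjection_minimal (T x)
  have hle : (⨅ v : Submodule.span ℂ t, ‖T x - v‖) ≤ ‖T x - y‖ :=
    ciInf_le (f := fun v : Submodule.span ℂ t => ‖T x - v‖)
      ⟨0, by rintro _ ⟨v, rfl⟩; exact norm_nonneg _⟩ ⟨y, Submodule.subset_span hyt⟩
  rw [← hmin] at hle
  exact hle.trans hy.le

/-- If `c` inverts `1 - b a`, then `1 + a c b` inverts `1 - a b`. -/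
lemma isUnit_one_sub_comp {E F : Type*} [NormedAddCommGroup E] [NormedSpace ℂ E]
    [NormedAddCommGroup F] [NormedSpace ℂ F] (a : F →L[ℂ] E) (b : E →L[ℂ] F)
    (h : IsUnit (1 - b ∘L a)) : IsUnit (1 - a ∘L b) := by
  obtain ⟨c, h1, h2⟩ := isUnit_iff_exists.1 h
  refine isUnit_iff_exists.2 ⟨1 + a ∘L c ∘L b, ?_, ?_⟩
  · ext x
    have := congrArg a (DFunLike.congr_fun h1 (b x))
    simp at this ⊢
    rw [← sub_eq_zero] at this ⊢
    rw [← this]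
    abel
  · ext x
    have := congrArg a (DFunLike.congr_fun h2 (b x))
    simp at this ⊢
    rw [← sub_eq_zero] at this ⊢
    rw [← this]
    abel

lemma isUnit_one_sub_comp_comm {E F : Type*} [NormedAddCommGroup E] [NormedSpace ℂ E]
    [NormedAddCommGroup F] [NormedSpace ℂ F] (a : F →L[ℂ] E) (b : E →L[ℂ] F) :
    IsUnit (1 - a ∘L b) ↔ IsUnit (1 - b ∘L a) :=
  ⟨isUnit_one_sub_comp b a, isUnit_one_sub_comp a b⟩

/-- Near `w`, invertibility of `1 - K z` is equivalent to the nonvanishing of a scalar analytic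
function. -/
lemma exists_analytic_detector {H : Type*} [NormedAddCommGroup H] [InnerProductSpace ℂ H]
    [CompleteSpace H] (K : ℂ → H →L[ℂ] H) (w : ℂ) (hK : AnalyticAt ℂ K w)
    (hc : IsCompactOperator (K w)) :
    ∃ f : ℂ → ℂ, AnalyticAt ℂ f w ∧ ∀ᶠ z in 𝓝 w, (IsUnit (1 - K z) ↔ f z ≠ 0) := by
  obtain ⟨V, hV, P, hP⟩ := exists_finiteRank_approx (K w) hc
  set S : ℂ → H →L[ℂ] H := fun z => 1 - (K z - V.subtypeL ∘L P) with hS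
  have hSan : AnalyticAt ℂ S w := analyticAt_const.sub (hK.sub analyticAt_const)
  have hSunit : ∀ᶠ z in 𝓝 w, IsUnit (S z) := by
    have hcont : ContinuousAt (fun z => ‖K z - V.subtypeL ∘L P‖) w :=
      (hK.continuousAt.sub continuousAt_const).norm
    filter_upwards [hcont.eventually_lt_const hP] with z hz
    exact (Units.oneSub _ hz).isUnit
  set G : ℂ → H →L[ℂ] H := fun z => Ring.inverse (S z) with hG
  have hGan : AnalyticAt ℂ G w :=
    AnalyticAt.comp (analyticOnNhd_inverse (𝕜 := ℂ) (S w) hSunit.self_of_nhds) hSan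
  let B : ℂ → V →L[ℂ] V := fun z => 1 - P ∘L (G z ∘L V.subtypeL)
  let b := stdOrthonormalBasis ℂ V
  refine ⟨fun z => LinearMap.det (B z : V →ₗ[ℂ] V), ?_, ?_⟩
  · have hentry : ∀ i j, AnalyticAt ℂ
        (fun z => LinearMap.toMatrix b.toBasis b.toBasis (B z : V →ₗ[ℂ] V) i j) w := by
      intro i j
      -- the entry is affine in `G z`, through a continuous linear functional
      let L : (H →L[ℂ] H) →L[ℂ] ℂ :=
        (innerSL ℂ (b i)) ∘L P ∘L (ContinuousLinearMap.apply ℂ H ((b j : V) : H))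
      have h1 : AnalyticAt ℂ (fun z => (if i = j then 1 else 0) - L (G z)) w :=
        analyticAt_const.sub ((L.analyticAt _).comp hGan)
      refine h1.congr (Eventually.of_forall fun z => ?_)
      simp [LinearMap.toMatrix_apply, B, L, OrthonormalBasis.repr_apply_apply]
    have hdet : (fun z => LinearMap.det (B z : V →ₗ[ℂ] V)) = fun z =>
        ∑ σ : Equiv.Perm (Fin (Module.finrank ℂ V)), ((Equiv.Perm.sign σ : ℤ) : ℂ) *
          ∏ i, LinearMap.toMatrix b.toBasis b.toBasis (B z : V →ₗ[ℂ] V) (σ i) i := by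
      funext z
      rw [← LinearMap.det_toMatrix b.toBasis, Matrix.det_apply']
    rw [hdet]
    exact Finset.analyticAt_fun_sum _ fun σ _ =>
      analyticAt_const.mul (Finset.analyticAt_fun_prod _ fun i _ => hentry _ _)
  · filter_upwards [hSunit] with z hz
    have hfac : 1 - K z = S z * (1 - (G z ∘L V.subtypeL) ∘L P) := by
      have hSG : S z * G z = 1 := Ring.mul_inverse_cancel _ hz
      have : (G z ∘L V.subtypeL) ∘L P = G z * (V.subtypeL ∘L P) := rfl
      rw [this, mul_sub, ← mul_assoc, hSG, hS]
      simp only [mul_one, one_mul]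
      abel
    rw [hfac, hz.mul_left_iff, isUnit_one_sub_comp_comm,
      ContinuousLinearMap.isUnit_iff_isUnit_toLinearMap, LinearMap.isUnit_iff_isUnit_det,
      isUnit_iff_ne_zero]

/-- `H` complex separable Hilbert space, `A` analytic on the open connected set
`D ∋ 0` with compact values. Let `Δ ⊆ D \ {0}` be open and connected, and suppose there is
`z₀ ∈ Δ` with `I - z₀⁻¹ A z₀` boundedly invertible. Then the set of characteristic values of `A`
contained in `Δ` has no accumulation point in `Δ`. -/
theorem stmt2 {H : Type*} [NormedAddCommGroup H] [InnerProductSpace ℂ H]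
    [CompleteSpace H] [TopologicalSpace.SeparableSpace H]
    (D : Set ℂ) (hDopen : IsOpen D) (hDconn : IsConnected D) (hD0 : (0 : ℂ) ∈ D)
    (A : ℂ → H →L[ℂ] H)
    (hAanalytic : ∀ z ∈ D, AnalyticAt ℂ A z)
    (hAcompact : ∀ z ∈ D, IsCompactOperator (A z))
    (Δ : Set ℂ) (hΔopen : IsOpen Δ) (hΔconn : IsConnected Δ) (hΔsub : Δ ⊆ D \ {0})
    (z₀ : ℂ) (hz₀ : z₀ ∈ Δ) (hz₀inv : IsUnit (1 - z₀⁻¹ • A z₀)) :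
    ∀ w ∈ Δ, ¬ AccPt w (Filter.principal {z | z ∈ Δ ∧ ¬ IsUnit (1 - z⁻¹ • A z)}) := by
  have hdich : ∀ w ∈ Δ, (∀ᶠ z in 𝓝[≠] w, IsUnit (1 - z⁻¹ • A z)) ∨
      (∀ᶠ z in 𝓝 w, ¬ IsUnit (1 - z⁻¹ • A z)) := by
    intro w hw
    obtain ⟨hwD, hw0⟩ := hΔsub hw
    have hK : AnalyticAt ℂ (fun z => z⁻¹ • A z) w :=
      (analyticAt_id.inv hw0).smul (hAanalytic w hwD)
    obtain ⟨f, hf, hiff⟩ := exists_analytic_detector _ w hK ((hAcompact w hwD).smul w⁻¹)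
    rcases hf.eventually_eq_zero_or_eventually_ne_zero with h | h
    · right
      filter_upwards [hiff, h] with z h1 h2
      simp [h1, h2]
    · left
      filter_upwards [hiff.filter_mono nhdsWithin_le_nhds, h] with z h1 h2
      exact h1.2 h2
  have hu : IsOpen {w : ℂ | ∀ᶠ z in 𝓝[≠] w, IsUnit (1 - z⁻¹ • A z)} := by
    refine isOpen_iff_mem_nhds.2 fun w hw => ?_
    have h := eventually_nhdsNE_eventually_nhds_iff.2 hw
    rw [eventually_nhdsWithin_iff] at h
    filter_upwards [h] with z hz
    by_cases hzw : z = w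
    · exact hzw ▸ hw
    · exact (hz hzw).filter_mono nhdsWithin_le_nhds
  have hv : IsOpen {w : ℂ | ∀ᶠ z in 𝓝 w, ¬ IsUnit (1 - z⁻¹ • A z)} :=
    isOpen_setOfPred_eventually_nhds
  have hdisj : Disjoint {w : ℂ | ∀ᶠ z in 𝓝[≠] w, IsUnit (1 - z⁻¹ • A z)}
      {w : ℂ | ∀ᶠ z in 𝓝 w, ¬ IsUnit (1 - z⁻¹ • A z)} := by
    refine Set.disjoint_left.2 fun w (h1 : ∀ᶠ z in 𝓝[≠] w, IsUnit (1 - z⁻¹ • A z))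
      (h2 : ∀ᶠ z in 𝓝 w, ¬ IsUnit (1 - z⁻¹ • A z)) => ?_
    obtain ⟨z, h3, h4⟩ :=
      (h1.and (h2.filter_mono nhdsWithin_le_nhds)).exists
    exact h4 h3
  have hz₀u : z₀ ∈ {w : ℂ | ∀ᶠ z in 𝓝[≠] w, IsUnit (1 - z⁻¹ • A z)} :=
    (hdich z₀ hz₀).resolve_right fun h => h.self_of_nhds hz₀inv
  have hsub := hΔconn.isPreconnected.subset_left_of_subset_union hu hv hdisj hdich ⟨z₀, hz₀, hz₀u⟩
  intro w hw hacc
  have hw' : ∀ᶠ z in 𝓝 w, z ≠ w → IsUnit (1 - z⁻¹ • A z) :=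
    eventually_nhdsWithin_iff.1 (hsub hw)
  obtain ⟨z, ⟨hzw, -, hz⟩, hz'⟩ := ((accPt_iff_frequently.1 hacc).and_eventually hw').exists
  exact hz (hz' hzw)
end

section
/- There exist constants C > 0 and δ > 0 such that for all x, y ∈ ℝ³ with |x_⊥ − y_⊥| ≤ δ and all v ≥ 1, one has |exp(−(b|x_⊥−y_⊥|²/4)(coth(1/v) − v)) / (v sinh(1/v)) − 1| ≤ C/v. -/
/-!
Put `t = 1/v ∈ (0,1]` and `c = b|x_⊥-y_⊥|²/4`, so that `0 ≤ c ≤ b/4` once `δ = 1`. Two elementary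
first-order estimates carry the proof: `1 ≤ (sinh t)/t ≤ 1 + t` and `0 ≤ coth t - 1/t ≤ t`
(`coth_sub_inv_nonneg`, `coth_sub_inv_le`). Hence the exponential lies in `[1 - ct, 1]` and the
denominator in `[1, 1 + t]`, so the quotient is at most `1` and falls short of it by at most
`(1 + c)t`; thus `C = 1 + b/4` works.
-/

open MeasureTheory Set

/-- `|x_⊥ - y_⊥|²` for `x, y ∈ ℝ³`. -/
noncomputable def perpSq (x y : EuclideanSpace ℝ (Fin 3)) : ℝ :=
  (x 0 - y 0) ^ 2 + (x 1 - y 1) ^ 2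

/-- The integrand `exp(-(b/4)[(x₃-y₃)²/u + coth(u)|x_⊥-y_⊥|²]) / (u^{1/2} sinh u)`. -/
noncomputable def kerInt (b : ℝ) (x y : EuclideanSpace ℝ (Fin 3)) (u : ℝ) : ℝ :=
  Real.exp (-(b / 4) * ((x 2 - y 2) ^ 2 / u + Real.cosh u / Real.sinh u * perpSq x y)) /
    (Real.sqrt u * Real.sinh u)

/-- `I₀(x,y) = (b^{1/2}/(4π)^{3/2}) ∫₀¹ kerInt b x y u du`. -/
noncomputable def I0 (b : ℝ) (x y : EuclideanSpace ℝ (Fin 3)) : ℝ :=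
  Real.sqrt b / (4 * Real.pi) ^ ((3 : ℝ) / 2) * ∫ u in Ioo (0 : ℝ) 1, kerInt b x y u

/-- `I_∞(x,y) = (b^{1/2}/(4π)^{3/2}) ∫₁^∞ kerInt b x y u du`. -/
noncomputable def IInf (b : ℝ) (x y : EuclideanSpace ℝ (Fin 3)) : ℝ :=
  Real.sqrt b / (4 * Real.pi) ^ ((3 : ℝ) / 2) * ∫ u in Ici (1 : ℝ), kerInt b x y u

/-- Equivalent to `tanh t ≤ t`: the difference `t cosh t - sinh t` vanishes at `0` and has
derivative `t sinh t ≥ 0`. -/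
lemma sinh_le_mul_cosh {t : ℝ} (ht : 0 ≤ t) : Real.sinh t ≤ t * Real.cosh t := by
  have hd (x : ℝ) : HasDerivAt (fun s => s * Real.cosh s - Real.sinh s) (x * Real.sinh x) x := by
    have h := ((hasDerivAt_id x).mul (Real.hasDerivAt_cosh x)).sub (Real.hasDerivAt_sinh x)
    exact h.congr_deriv (by simp)
  have hm : MonotoneOn (fun s => s * Real.cosh s - Real.sinh s) (Ici 0) := by
    refine monotoneOn_of_deriv_nonneg (convex_Ici 0)
      (fun x _ => (hd x).continuousAt.continuousWithinAt)
      (fun x _ => (hd x).differentiableAt.differentiableWithinAt) fun x hx => ?_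
    rw [interior_Ici, mem_Ioi] at hx
    rw [(hd x).deriv]
    exact mul_nonneg hx.le (Real.sinh_nonneg_iff.2 hx.le)
  have h := hm (mem_Ici.2 le_rfl) (mem_Ici.2 ht) ht
  simp only [zero_mul, Real.sinh_zero, sub_zero] at h
  linarith

lemma cosh_le_one_add_sq {t : ℝ} (ht : |t| ≤ 1) : Real.cosh t ≤ 1 + t ^ 2 := by
  have h1 := (abs_le.1 (Real.abs_exp_sub_one_sub_id_le ht)).2
  have h2 := (abs_le.1 (Real.abs_exp_sub_one_sub_id_le (x := -t) (by rwa [abs_neg]))).2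
  rw [Real.cosh_eq]
  linarith [neg_sq t]

lemma sinh_le_add_sq {t : ℝ} (ht : |t| ≤ 1) : Real.sinh t ≤ t + t ^ 2 := by
  have h1 := (abs_le.1 (Real.abs_exp_sub_one_sub_id_le ht)).2
  have h2 := Real.add_one_le_exp (-t)
  rw [Real.sinh_eq]
  linarith [sq_nonneg t]

lemma coth_sub_inv_nonneg {t : ℝ} (ht : 0 < t) : 0 ≤ Real.cosh t / Real.sinh t - 1 / t := by
  rw [sub_nonneg, div_le_div_iff₀ ht (Real.sinh_pos_iff.2 ht)]
  linarith [sinh_le_mul_cosh ht.le]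

/-- Follows from `t cosh t ≤ t (1 + t²) ≤ (1 + t²) sinh t`. -/
lemma coth_sub_inv_le {t : ℝ} (ht : 0 < t) (ht1 : t ≤ 1) :
    Real.cosh t / Real.sinh t - 1 / t ≤ t := by
  have hc := cosh_le_one_add_sq (abs_le.2 ⟨by linarith, ht1⟩)
  have hs := Real.self_le_sinh_iff.2 ht.le
  have hcs : Real.cosh t * t ≤ (1 + t ^ 2) * Real.sinh t := by gcongr
  have e : 1 / t + t = (1 + t ^ 2) / t := by field_simp
  rw [sub_le_iff_le_add', e, div_le_div_iff₀ (Real.sinh_pos_iff.2 ht) ht]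
  exact hcs

/-- There are `C > 0` and `δ > 0` such that for all `x, y ∈ ℝ³` with
`|x_⊥ - y_⊥| ≤ δ` and all `v ≥ 1`:
`|exp(-(b|x_⊥-y_⊥|²/4)(coth(1/v) - v)) / (v sinh(1/v)) - 1| ≤ C/v`. -/
theorem stmt4 (b : ℝ) (hb : 0 < b) :
    ∃ C > (0 : ℝ), ∃ δ > (0 : ℝ), ∀ x y : EuclideanSpace ℝ (Fin 3),
      Real.sqrt (perpSq x y) ≤ δ → ∀ v : ℝ, 1 ≤ v →
        |Real.exp (-(b * perpSq x y / 4) * (Real.cosh (1 / v) / Real.sinh (1 / v) - v)) /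
            (v * Real.sinh (1 / v)) - 1| ≤ C / v := by
  refine ⟨1 + b / 4, by positivity, 1, one_pos, fun x y hxy v hv => ?_⟩
  have hp0 : 0 ≤ perpSq x y := by unfold perpSq; positivity
  have hp1 : perpSq x y ≤ 1 := by simpa using (Real.sqrt_le_left zero_le_one).1 hxy
  have hv0 : 0 < v := by linarith
  obtain ⟨t, rfl⟩ : ∃ t, v = 1 / t := ⟨1 / v, (one_div_one_div v).symm⟩
  have ht : 0 < t := one_div_pos.1 hv0
  have ht1 : t ≤ 1 := by simpa using (le_div_iff₀ ht).1 hv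
  rw [one_div_one_div, div_div_eq_mul_div, div_one]
  have hD0 := coth_sub_inv_nonneg ht
  have hD1 := coth_sub_inv_le ht ht1
  set D := Real.cosh t / Real.sinh t - 1 / t
  set c := b * perpSq x y / 4 with hc
  have hc0 : 0 ≤ c := by positivity
  have hc1 : c ≤ b / 4 := by
    rw [hc]
    linarith [mul_le_of_le_one_right hb.le hp1]
  have hE1 : Real.exp (-c * D) ≤ 1 := by
    rw [Real.exp_le_one_iff, neg_mul, neg_nonpos]
    positivity
  have hE0 : 1 - b / 4 * t ≤ Real.exp (-c * D) := by
    have h1 := Real.add_one_le_exp (-c * D)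
    have h2 : c * D ≤ b / 4 * t := by gcongr
    linarith
  have hs1 : 1 ≤ 1 / t * Real.sinh t := by
    rw [one_div_mul_eq_div, one_le_div ht]
    exact Real.self_le_sinh_iff.2 ht.le
  have hs2 : 1 / t * Real.sinh t ≤ 1 + t := by
    rw [one_div_mul_eq_div, div_le_iff₀ ht]
    linarith [sinh_le_add_sq (abs_le.2 ⟨by linarith, ht1⟩)]
  set s := 1 / t * Real.sinh t
  set E := Real.exp (-c * D)
  have hs0 : 0 < s := by linarith
  have hK : 0 ≤ (1 + b / 4) * t := by positivity
  rw [abs_le]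
  constructor
  · rw [neg_le_sub_iff_le_add, ← sub_le_iff_le_add, le_div_iff₀ hs0]
    -- `s - E ≤ (1 + b/4) t ≤ (1 + b/4) t s`, since `s ≥ 1`.
    linarith [le_mul_of_one_le_right hK hs1]
  · have : E / s ≤ 1 := (div_le_one hs0).2 (hE1.trans hs1)
    linarith
end

section
/- For every x ∈ ℝ³, the function y ↦ I_∞(x,y) is differentiable on ℝ³, and for each j ∈ {1,2,3} there exists a constant C > 0 (independent of x and y) such that |∂I_∞/∂y_j (x,y)| ≤ C |x_j − y_j| for all x, y ∈ ℝ³. -/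
/-!
For `u ≥ 1` the exponent of the kernel is `-(b/4) ∑ⱼ aⱼ(u) (xⱼ - yⱼ)²` with weights
`a₀ = a₁ = coth u`, `a₂ = 1/u`, all lying in `[0, 2]`, while the kernel itself is at most
`1 / sinh u ≤ 4 e⁻ᵘ`. Its `j`-th partial derivative in `y` is `(b/2) aⱼ(u) (xⱼ - yⱼ)` times the
kernel, so it is bounded by `4 b e⁻ᵘ |xⱼ - yⱼ|` (`abs_kerCoef_le`). This is integrable on
`[1, ∞)`, locally uniformly in `y`, so differentiation under the integral sign is legitimate
(`hasFDerivAt_integral_kerInt`), and integrating the pointwise bound over `u` gives the estimate.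
-/

open MeasureTheory Set

/-- The weight of `(xⱼ - yⱼ)²` in the exponent of the kernel: `1/u` for the third coordinate
(index `2`), `coth u` for the other two. -/
noncomputable def expWeight (j : Fin 3) (u : ℝ) : ℝ :=
  if j = 2 then 1 / u else Real.cosh u / Real.sinh u

/-- The partial derivative `∂/∂yⱼ` of the kernel `kerInt b x y u`. -/
noncomputable def kerCoef (b : ℝ) (x y : EuclideanSpace ℝ (Fin 3)) (j : Fin 3) (u : ℝ) : ℝ :=
  kerInt b x y u * (b / 2 * expWeight j u * (x j - y j))

/-- The differential in `y` of the kernel `kerInt b x y u`. -/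
noncomputable def kerDeriv (b : ℝ) (x y : EuclideanSpace ℝ (Fin 3)) (u : ℝ) :
    EuclideanSpace ℝ (Fin 3) →L[ℝ] ℝ :=
  ∑ j : Fin 3, kerCoef b x y j u • EuclideanSpace.proj (𝕜 := ℝ) j

theorem exp_bounds {u : ℝ} (hu : 1 ≤ u) :
    Real.exp u / 4 ≤ Real.sinh u ∧ Real.cosh u ≤ 2 * Real.sinh u := by
  have h1 : 3 ≤ Real.exp u * Real.exp u := by
    rw [← Real.exp_add]
    linarith [Real.add_one_le_exp (u + u)]
  have h2 : Real.exp u * Real.exp (-u) = 1 := by rw [← Real.exp_add]; simp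
  have h3 : 3 * Real.exp (-u) ≤ Real.exp u := by
    have := Real.exp_pos (-u)
    nlinarith [mul_le_mul_of_nonneg_right h1 this.le]
  have := Real.exp_pos (-u)
  rw [Real.sinh_eq, Real.cosh_eq]
  constructor <;> linarith

theorem expWeight_mem {u : ℝ} (hu : 1 ≤ u) (j : Fin 3) :
    0 ≤ expWeight j u ∧ expWeight j u ≤ 2 := by
  have hs : 0 < Real.sinh u := Real.sinh_pos_iff.2 (by linarith)
  unfold expWeight
  split_ifs
  · refine ⟨by positivity, ?_⟩
    rw [div_le_iff₀ (by linarith)]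
    linarith
  · refine ⟨div_nonneg (Real.cosh_pos u).le hs.le, ?_⟩
    rw [div_le_iff₀ hs]
    exact (exp_bounds hu).2

theorem kerInt_eq (b : ℝ) (x y : EuclideanSpace ℝ (Fin 3)) (u : ℝ) :
    kerInt b x y u = Real.exp (-(b / 4) * ∑ j : Fin 3, expWeight j u * (x j - y j) ^ 2) /
      (Real.sqrt u * Real.sinh u) := by
  unfold kerInt perpSq
  congr 3
  simp [Fin.sum_univ_three, expWeight]
  ring

theorem kerInt_bounds {b : ℝ} (hb : 0 < b) (x y : EuclideanSpace ℝ (Fin 3)) {u : ℝ}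
    (hu : 1 ≤ u) : 0 ≤ kerInt b x y u ∧ kerInt b x y u ≤ 4 * Real.exp (-u) := by
  have hs : 0 < Real.sinh u := Real.sinh_pos_iff.2 (by linarith)
  have hq : 1 ≤ Real.sqrt u := Real.one_le_sqrt.2 hu
  rw [kerInt_eq]
  refine ⟨by positivity, ?_⟩
  have hsum : 0 ≤ ∑ j : Fin 3, expWeight j u * (x j - y j) ^ 2 :=
    Finset.sum_nonneg fun j _ => mul_nonneg (expWeight_mem hu j).1 (sq_nonneg _)
  have he : Real.exp (-(b / 4) * ∑ j : Fin 3, expWeight j u * (x j - y j) ^ 2) ≤ 1 :=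
    Real.exp_le_one_iff.2 (by nlinarith [mul_nonneg hb.le hsum])
  rw [div_le_iff₀ (by positivity)]
  have h2 : Real.exp u * Real.exp (-u) = 1 := by rw [← Real.exp_add]; simp
  have h4 : 1 ≤ 4 * Real.exp (-u) * Real.sinh u := by
    nlinarith [mul_le_mul_of_nonneg_right (exp_bounds hu).1 (Real.exp_pos (-u)).le]
  nlinarith

theorem abs_kerCoef_le {b : ℝ} (hb : 0 < b) (x y : EuclideanSpace ℝ (Fin 3)) (j : Fin 3)
    {u : ℝ} (hu : 1 ≤ u) :
    |kerCoef b x y j u| ≤ 4 * Real.exp (-u) * (b * |x j - y j|) := by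
  obtain ⟨h0, h1⟩ := kerInt_bounds hb x y hu
  obtain ⟨g0, g1⟩ := expWeight_mem hu j
  unfold kerCoef
  rw [abs_mul, abs_mul, abs_of_nonneg h0, abs_of_nonneg (mul_nonneg (by linarith) g0)]
  gcongr
  nlinarith

theorem hasFDerivAt_kerInt (b : ℝ) (x y : EuclideanSpace ℝ (Fin 3)) (u : ℝ) :
    HasFDerivAt (fun y => kerInt b x y u) (kerDeriv b x y u) y := by
  simp only [kerInt_eq]
  have hp (j : Fin 3) : HasFDerivAt (fun y : EuclideanSpace ℝ (Fin 3) => y j)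
      (EuclideanSpace.proj (𝕜 := ℝ) j) y := (EuclideanSpace.proj (𝕜 := ℝ) j).hasFDerivAt
  have hsum := HasFDerivAt.fun_sum (u := Finset.univ) fun j _ =>
    (((hp j).const_sub (x j)).pow 2).const_mul (expWeight j u)
  have := ((hsum.const_mul (-(b / 4))).exp).mul_const (Real.sqrt u * Real.sinh u)⁻¹
  simp only [div_eq_mul_inv]
  refine this.congr_fderiv ?_
  ext v
  simp [kerDeriv, kerCoef, kerInt_eq, Fin.sum_univ_three]
  ring

theorem measurable_expWeight (j : Fin 3) : Measurable (expWeight j) := by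
  unfold expWeight
  split_ifs <;> fun_prop

theorem measurable_kerInt (b : ℝ) (x y : EuclideanSpace ℝ (Fin 3)) :
    Measurable (kerInt b x y) := by
  unfold kerInt
  fun_prop

theorem measurable_kerCoef (b : ℝ) (x y : EuclideanSpace ℝ (Fin 3)) (j : Fin 3) :
    Measurable (kerCoef b x y j) := by
  have := measurable_expWeight j
  have := measurable_kerInt b x y
  unfold kerCoef
  fun_prop

theorem integrable_four_exp :
    Integrable (fun u : ℝ => 4 * Real.exp (-u)) (volume.restrict (Ici 1)) := by
  have := (integrableOn_exp_neg_Ioi (1 : ℝ)).const_mul 4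
  exact (integrableOn_Ici_iff_integrableOn_Ioi).2 this

theorem integrable_kerInt {b : ℝ} (hb : 0 < b) (x y : EuclideanSpace ℝ (Fin 3)) :
    Integrable (kerInt b x y) (volume.restrict (Ici 1)) := by
  refine integrable_four_exp.mono' (measurable_kerInt b x y).aestronglyMeasurable ?_
  filter_upwards [ae_restrict_mem measurableSet_Ici] with u hu
  obtain ⟨h0, h1⟩ := kerInt_bounds hb x y hu
  rwa [Real.norm_eq_abs, abs_of_nonneg h0]

theorem measurable_kerDeriv (b : ℝ) (x y : EuclideanSpace ℝ (Fin 3)) (μ : Measure ℝ) :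
    AEStronglyMeasurable (kerDeriv b x y) μ := by
  unfold kerDeriv
  refine Finset.aestronglyMeasurable_fun_sum _ fun j _ => ?_
  exact (measurable_kerCoef b x y j).aestronglyMeasurable.smul_const _

theorem abs_apply_le_norm (v : EuclideanSpace ℝ (Fin 3)) (j : Fin 3) : |v j| ≤ ‖v‖ := by
  simpa using PiLp.norm_apply_le v j

theorem norm_kerDeriv_le {b : ℝ} (hb : 0 < b) (x y : EuclideanSpace ℝ (Fin 3)) {u : ℝ}
    (hu : 1 ≤ u) : ‖kerDeriv b x y u‖ ≤ 4 * Real.exp (-u) * (3 * b * ‖x - y‖) := by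
  refine ContinuousLinearMap.opNorm_le_bound _ (by positivity) fun v => ?_
  have h (j : Fin 3) : |kerCoef b x y j u * v j| ≤
      4 * Real.exp (-u) * (b * ‖x - y‖) * ‖v‖ := by
    rw [abs_mul]
    have h1 : |x j - y j| ≤ ‖x - y‖ := abs_apply_le_norm (x - y) j
    have h2 := abs_apply_le_norm v j
    have h3 := abs_kerCoef_le hb x y j hu
    calc _ ≤ 4 * Real.exp (-u) * (b * |x j - y j|) * ‖v‖ := by gcongr
      _ ≤ _ := by gcongr
  calc ‖kerDeriv b x y u v‖ = |∑ j : Fin 3, kerCoef b x y j u * v j| := by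
        simp [kerDeriv, Fin.sum_univ_three]
    _ ≤ ∑ j : Fin 3, |kerCoef b x y j u * v j| := Finset.abs_sum_le_sum_abs _ _
    _ ≤ ∑ _j : Fin 3, 4 * Real.exp (-u) * (b * ‖x - y‖) * ‖v‖ :=
        Finset.sum_le_sum fun j _ => h j
    _ = _ := by simp; ring

theorem hasFDerivAt_integral_kerInt {b : ℝ} (hb : 0 < b) (x y : EuclideanSpace ℝ (Fin 3)) :
    HasFDerivAt (fun y => ∫ u in Ici (1 : ℝ), kerInt b x y u)
      (∫ u in Ici (1 : ℝ), kerDeriv b x y u) y := by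
  refine hasFDerivAt_integral_of_dominated_of_fderiv_le
    (bound := fun u => 4 * Real.exp (-u) * (3 * b * (‖x - y‖ + 1)))
    (Metric.ball_mem_nhds y one_pos)
    (Filter.Eventually.of_forall fun z => (measurable_kerInt b x z).aestronglyMeasurable)
    (integrable_kerInt hb x y) (measurable_kerDeriv b x y _) ?_
    (integrable_four_exp.mul_const _)
    (Filter.Eventually.of_forall fun u z _ => hasFDerivAt_kerInt b x z u)
  filter_upwards [ae_restrict_mem measurableSet_Ici] with u hu z hz
  refine (norm_kerDeriv_le hb x z hu).trans ?_
  have : ‖x - z‖ ≤ ‖x - y‖ + 1 := by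
    have h1 := norm_sub_le_norm_sub_add_norm_sub x y z
    have h2 : ‖y - z‖ < 1 := by rwa [← dist_eq_norm, dist_comm]
    linarith
  gcongr

theorem integrable_kerDeriv {b : ℝ} (hb : 0 < b) (x y : EuclideanSpace ℝ (Fin 3)) :
    Integrable (kerDeriv b x y) (volume.restrict (Ici 1)) := by
  refine (integrable_four_exp.mul_const (3 * b * ‖x - y‖)).mono' (measurable_kerDeriv b x y _) ?_
  filter_upwards [ae_restrict_mem measurableSet_Ici] with u hu
  exact norm_kerDeriv_le hb x y hu

/-- For every `x ∈ ℝ³` the function `y ↦ I_∞(x,y)` is differentiable on `ℝ³`,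
and for each coordinate `j` there is a constant `C > 0` (independent of `x, y`) with
`|∂I_∞/∂y_j (x,y)| ≤ C |x_j - y_j|` for all `x, y ∈ ℝ³`. -/
theorem stmt8 (b : ℝ) (hb : 0 < b) :
    (∀ x : EuclideanSpace ℝ (Fin 3), Differentiable ℝ (fun y => IInf b x y)) ∧
      ∀ j : Fin 3, ∃ C > (0 : ℝ), ∀ x y : EuclideanSpace ℝ (Fin 3),
        |fderiv ℝ (fun y' => IInf b x y') y (EuclideanSpace.single j 1)| ≤
          C * |x j - y j| := by
  have hD (x y : EuclideanSpace ℝ (Fin 3)) :=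
    (hasFDerivAt_integral_kerInt hb x y).const_mul
      (Real.sqrt b / (4 * Real.pi) ^ ((3 : ℝ) / 2))
  refine ⟨fun x y => (hD x y).differentiableAt, fun j => ?_⟩
  set c := Real.sqrt b / (4 * Real.pi) ^ ((3 : ℝ) / 2)
  have hc : 0 ≤ c := by positivity
  set M := ∫ u in Ici (1 : ℝ), 4 * Real.exp (-u)
  have hM : 0 ≤ M := integral_nonneg fun u => by positivity
  -- the added `1` only secures strict positivity of the constant
  refine ⟨c * (M * b) + 1, by positivity, fun x y => ?_⟩
  have hf : fderiv ℝ (fun y' => IInf b x y') y = _ := (hD x y).fderiv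
  have happ (u : ℝ) : kerDeriv b x y u (EuclideanSpace.single j 1) = kerCoef b x y j u := by
    simp [kerDeriv]
  have hint : |∫ u in Ici (1 : ℝ), kerCoef b x y j u| ≤ M * (b * |x j - y j|) := by
    rw [← integral_mul_const]
    refine norm_integral_le_of_norm_le (f := kerCoef b x y j)
      (integrable_four_exp.mul_const _) ?_
    filter_upwards [ae_restrict_mem measurableSet_Ici] with u hu
    exact abs_kerCoef_le hb x y j hu
  rw [hf, smul_apply,
    ContinuousLinearMap.integral_apply (integrable_kerDeriv hb x y)]
  simp only [happ]
  rw [smul_eq_mul, abs_mul, abs_of_nonneg hc]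
  nlinarith [mul_le_mul_of_nonneg_left hint hc, abs_nonneg (x j - y j)]
end
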